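/- Let ε > 0 and let Q be a privacy protocol satisfying ε-LDP, all of whose entries are positive and whose rank is a, and let μ be a Borel probability measure on the simplex 𝒫 having a continuous density, with p ↦ log det D_p μ-integrable. Then liminf_{n→∞} n · MSE^distr_{μ,n}(Q,Π_opt,n) ≥ a / (e^ε − 1)². -/

import Mathlib

/-!
The bound is a Bayesian Cramér–Rao (van Trees) inequality. On the tangent space `{v | ∑ v = 0}` of
the simplex the Fisher information of one observation is `v ↦ ∑_y (Qv)_y² / (Qp)_y`. Under `ε`-LDP
the entries of each row of `Q` lie in an interval `[m_y, e^ε m_y]`, so Popoviciu's inequality bounds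
the trace of this form by `T = a (e^ε - 1)² / 4` (`fisher_trace_le`).

The van Trees inequality is applied in divergence form: integrating by parts the field `Est - p`
against the posterior weight along the projected basis vectors `e_x - 1/a`, whose divergence is
`a - 1`, gives `n · MSE ≥ (a - 1)² / T` up to an `O(1/n)` prior term (`van_trees`), and
`(a - 1)² / T = 4 (a - 1)² / (a (e^ε - 1)²) ≥ a / (e^ε - 1)²` because `a ≥ 2`.

The prior density is only continuous, so it is replaced by a smooth minorant `h²` supported in `Δ`
whose mass is close to `1` (`exists_smooth_minorant`); this can only decrease the risk.

Since `Filter.liminf` is taken in `ℝ`, the sequence `n · MSE` must also be shown to be bounded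
above. The posterior mean is at least as good as the unbiased linear estimator built from a left
inverse of `Q`, whose risk is `O(1/n)` (`exists_MSE_upper`).
-/

open MeasureTheory Matrix Finset Filter Real

noncomputable section

/-- The probability simplex in `ℝ^a`. -/
def simplex (a : ℕ) : Set (Fin a → ℝ) :=
  {p | (∀ x, 0 ≤ p x) ∧ ∑ x, p x = 1}

/-- Likelihood `L_y(p) = ∏ i, (Qp)_{y i}`. -/
def lik {a b n : ℕ} (Q : Matrix (Fin b) (Fin a) ℝ) (y : Fin n → Fin b)
    (p : Fin a → ℝ) : ℝ :=
  ∏ i, Q.mulVec p (y i)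

/-- Mean squared error for distribution estimation. -/
def MSEdistr {a b n : ℕ} (Q : Matrix (Fin b) (Fin a) ℝ) (μ : Measure (Fin a → ℝ))
    (Est : (Fin n → Fin b) → (Fin a → ℝ)) : ℝ :=
  ∑ y : (Fin n → Fin b), ∫ p, (∑ x, (p x - Est y x) ^ 2) * lik Q y p ∂μ

/-- The posterior-mean estimator for distribution estimation. -/
def PiOpt {a b n : ℕ} (Q : Matrix (Fin b) (Fin a) ℝ) (μ : Measure (Fin a → ℝ))
    (y : Fin n → Fin b) : Fin a → ℝ :=
  fun x => (∫ p, p x * lik Q y p ∂μ) / (∫ p, lik Q y p ∂μ)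

/-- Empirical frequency vector of a data vector. -/
def freqVec {a n : ℕ} (xv : Fin n → Fin a) : Fin a → ℝ :=
  fun α => ((Finset.univ.filter fun i => xv i = α).card : ℝ) / n

/-- Joint weight `w(x⃗,y⃗) = ∫ ∏ i, p_{x_i} Q_{y_i|x_i} dμ(p)`. -/
def wgt {a b n : ℕ} (Q : Matrix (Fin b) (Fin a) ℝ) (μ : Measure (Fin a → ℝ))
    (xv : Fin n → Fin a) (y : Fin n → Fin b) : ℝ :=
  ∫ p, (∏ i, p (xv i) * Q (y i) (xv i)) ∂μ

/-- Mean squared error for frequency estimation. -/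
def MSEfreq {a b n : ℕ} (Q : Matrix (Fin b) (Fin a) ℝ) (μ : Measure (Fin a → ℝ))
    (Est : (Fin n → Fin b) → (Fin a → ℝ)) : ℝ :=
  ∑ xv : (Fin n → Fin a), ∑ y : (Fin n → Fin b),
    wgt Q μ xv y * ∑ α, (freqVec xv α - Est y α) ^ 2

/-- The posterior-mean estimator for frequency estimation. -/
def PhiOpt {a b n : ℕ} (Q : Matrix (Fin b) (Fin a) ℝ) (μ : Measure (Fin a → ℝ))
    (y : Fin n → Fin b) : Fin a → ℝ :=
  fun α => (∑ xv : (Fin n → Fin a), wgt Q μ xv y * freqVec xv α) /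
    (∑ xv : (Fin n → Fin a), wgt Q μ xv y)

/-- `P(φ, y⃗) = ∑_{x⃗ : F(x⃗) = φ} w(x⃗, y⃗)`. -/
def Pphi {a b n : ℕ} (Q : Matrix (Fin b) (Fin a) ℝ) (μ : Measure (Fin a → ℝ))
    (φ : Fin a → ℝ) (y : Fin n → Fin b) : ℝ := by
  classical
  exact ∑ xv ∈ Finset.univ.filter (fun xv : Fin n → Fin a => freqVec xv = φ), wgt Q μ xv y

/-- Conditional Shannon entropy `H_n(F | Y⃗)` (terms with zero probability vanish since
`Real.log 0 = 0`). -/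
def HFcond {a b : ℕ} (Q : Matrix (Fin b) (Fin a) ℝ) (μ : Measure (Fin a → ℝ))
    (n : ℕ) : ℝ := by
  classical
  exact -(∑ y : (Fin n → Fin b), ∑ φ ∈ Finset.image (freqVec (a := a) (n := n)) Finset.univ,
      Pphi Q μ φ y * Real.log (Pphi Q μ φ y /
        ∑ φ' ∈ Finset.image (freqVec (a := a) (n := n)) Finset.univ, Pphi Q μ φ' y))

/-- The set `Δ = {q ∈ ℝ^m : q ≥ 0, ∑ q ≤ 1}`. -/
def stdCorner (m : ℕ) : Set (Fin m → ℝ) :=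
  {q | (∀ i, 0 ≤ q i) ∧ ∑ i, q i ≤ 1}

/-- The identification `Δ ⊂ ℝ^{a-1} → 𝒫 ⊂ ℝ^a`,
`q ↦ (q_1, …, q_{a-1}, 1 - ∑ q_i)`. -/
def emb (a : ℕ) (q : Fin (a - 1) → ℝ) : Fin a → ℝ :=
  fun x => if h : (x : ℕ) < a - 1 then q ⟨x.1, h⟩ else 1 - ∑ i, q i

/-- `μ` has density `f` (w.r.t. Lebesgue measure on `Δ`). -/
def IsDensity {a : ℕ} (μ : Measure (Fin a → ℝ)) (f : (Fin (a - 1) → ℝ) → ℝ) : Prop :=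
  Measurable f ∧ (∀ q, 0 ≤ f q) ∧ (∫ q in stdCorner (a - 1), f q) = 1 ∧
  ∀ g : (Fin a → ℝ) → ℝ, Measurable g → (∃ C, ∀ p, |g p| ≤ C) →
    (∫ p, g p ∂μ) = ∫ q in stdCorner (a - 1), g (emb a q) * f q

/-- `μ` has continuous density `f`. -/
def IsContDensity {a : ℕ} (μ : Measure (Fin a → ℝ)) (f : (Fin (a - 1) → ℝ) → ℝ) : Prop :=
  ContinuousOn f (stdCorner (a - 1)) ∧ (∀ q, 0 ≤ f q) ∧
  (∫ q in stdCorner (a - 1), f q) = 1 ∧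
  ∀ g : (Fin a → ℝ) → ℝ, Measurable g → (∃ C, ∀ p, |g p| ≤ C) →
    (∫ p, g p ∂μ) = ∫ q in stdCorner (a - 1), g (emb a q) * f q

/-- Normalisation constant `C_{y⃗} = ∫_Δ f(q) L_{y⃗}(p(q)) dλ(q)`. -/
def Cw {a b n : ℕ} (Q : Matrix (Fin b) (Fin a) ℝ) (f : (Fin (a - 1) → ℝ) → ℝ)
    (y : Fin n → Fin b) : ℝ :=
  ∫ q in stdCorner (a - 1), f q * lik Q y (emb a q)

/-- Posterior density `g_{y⃗}(q) = f(q) L_{y⃗}(p(q)) / C_{y⃗}`. -/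
def gpost {a b n : ℕ} (Q : Matrix (Fin b) (Fin a) ℝ) (f : (Fin (a - 1) → ℝ) → ℝ)
    (y : Fin n → Fin b) (q : Fin (a - 1) → ℝ) : ℝ :=
  f q * lik Q y (emb a q) / Cw Q f y

/-- Conditional differential entropy `h_n(P | Y⃗)`. -/
def hCond {a b : ℕ} (Q : Matrix (Fin b) (Fin a) ℝ) (f : (Fin (a - 1) → ℝ) → ℝ)
    (n : ℕ) : ℝ :=
  ∑ y : (Fin n → Fin b),
    Cw Q f y * (-(∫ q in stdCorner (a - 1), gpost Q f y q * Real.log (gpost Q f y q)))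

/-- The matrix `D_p = Qᵀ · diag(Qp)⁻¹ · Q`. -/
def Dmat {a b : ℕ} (Q : Matrix (Fin b) (Fin a) ℝ) (p : Fin a → ℝ) :
    Matrix (Fin a) (Fin a) ℝ :=
  Qᵀ * Matrix.diagonal (fun y => (Q.mulVec p y)⁻¹) * Q

/-- The constant `γ_μ(Q)`. -/
def gammaMu {a b : ℕ} (Q : Matrix (Fin b) (Fin a) ℝ) (μ : Measure (Fin a → ℝ)) : ℝ :=
  (((a : ℝ) - 1) / 2) * Real.log (2 * π * Real.exp 1) -
    (1 / 2) * ∫ p, Real.log (Dmat Q p).det ∂μ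

/-- The truncated column `w_x = (Q_{1|x}, …, Q_{b-1|x})`. -/
def wcol {a b : ℕ} (Q : Matrix (Fin b) (Fin a) ℝ) (x : Fin a) : Fin (b - 1) → ℝ :=
  fun y => Q ⟨y.1, lt_of_lt_of_le y.2 (Nat.sub_le b 1)⟩ x

/-- The matrix `E_x = diag(w_x) - w_x w_xᵀ`. -/
def Emat {a b : ℕ} (Q : Matrix (Fin b) (Fin a) ℝ) (x : Fin a) :
    Matrix (Fin (b - 1)) (Fin (b - 1)) ℝ :=
  Matrix.diagonal (wcol Q x) - Matrix.vecMulVec (wcol Q x) (wcol Q x)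

/-- The matrix `G_p = ∑ x, p_x E_x`. -/
def Gmat {a b : ℕ} (Q : Matrix (Fin b) (Fin a) ℝ) (p : Fin a → ℝ) :
    Matrix (Fin (b - 1)) (Fin (b - 1)) ℝ :=
  ∑ x, p x • Emat Q x

/-- The constant `δ_μ(Q)`. -/
def deltaMu {a b : ℕ} (Q : Matrix (Fin b) (Fin a) ℝ) (μ : Measure (Fin a → ℝ)) : ℝ :=
  gammaMu Q μ +
    (1 / 2) * ∫ p, (Real.log (Gmat Q p).det - ∑ y, Real.log (Q.mulVec p y)) ∂μ

/-- `Q` satisfies `ε`-local differential privacy. -/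
def SatisfiesLDP {a b : ℕ} (Q : Matrix (Fin b) (Fin a) ℝ) (ε : ℝ) : Prop :=
  ∀ x x' : Fin a, ∀ y : Fin b, Q y x' ≤ Real.exp ε * Q y x

/-! ### Moments of product measures and the Fisher information -/

/-- For i.i.d. `y_i` with law `r` and a centred function `s`, the second moment of
`c + ∑ s(y_i)` is `c² + n E[s²]`. -/
lemma iid_second_moment {b : ℕ} (r s : Fin b → ℝ) (hr : ∑ y, r y = 1)
    (hrs : ∑ y, r y * s y = 0) (n : ℕ) (c : ℝ) :
    ∑ y : Fin n → Fin b, (∏ i, r (y i)) * (c + ∑ i, s (y i)) ^ 2 =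
      c ^ 2 + n * ∑ y, r y * s y ^ 2 := by
  induction n generalizing c with
  | zero => simp
  | succ n ih =>
    rw [← (Fin.consEquiv (fun _ : Fin (n + 1) => Fin b)).sum_comp, Fintype.sum_prod_type]
    have h1 : ∀ z : Fin b, ∑ y : Fin n → Fin b,
        (∏ i, r ((Fin.consEquiv (fun _ : Fin (n + 1) => Fin b)) (z, y) i)) *
          (c + ∑ i, s ((Fin.consEquiv (fun _ : Fin (n + 1) => Fin b)) (z, y) i)) ^ 2 =
        r z * ((c + s z) ^ 2 + n * ∑ y, r y * s y ^ 2) := by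
      intro z
      rw [← ih, mul_sum]
      refine sum_congr rfl fun y _ => ?_
      simp only [Fin.consEquiv_apply, Fin.prod_univ_succ, Fin.sum_univ_succ, Fin.cons_zero,
        Fin.cons_succ]
      ring
    simp only [h1]
    set V := ∑ y, r y * s y ^ 2 with hV
    have h2 : ∀ z, r z * ((c + s z) ^ 2 + n * V) =
        r z * (c ^ 2 + n * V) + 2 * c * (r z * s z) + r z * s z ^ 2 := by intro z; ring
    simp only [h2, sum_add_distrib, ← sum_mul, ← mul_sum, hr, hrs, ← hV]
    push_cast
    ring

lemma iid_total {b : ℕ} (r : Fin b → ℝ) (hr : ∑ y, r y = 1) (n : ℕ) :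
    ∑ y : Fin n → Fin b, ∏ i, r (y i) = 1 := by
  have := Finset.prod_univ_sum (fun _ : Fin n => (univ : Finset (Fin b))) (fun _ y => r y)
  simpa [hr] using this.symm

/-- The projection `e_x - (1/a)·1` of the standard basis vector `e_x` onto the tangent space
`{v | ∑ v = 0}` of the simplex. -/
def tdir (a : ℕ) (x : Fin a) : Fin a → ℝ := fun z => (if z = x then 1 else 0) - 1 / (a : ℝ)

lemma sum_tdir {a : ℕ} (x : Fin a) : ∑ z, tdir a x z = 0 := by
  have : (a : ℝ) ≠ 0 := by
    have := x.pos
    positivity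
  simp [tdir, sum_sub_distrib, this]

lemma mulVec_tdir {a b : ℕ} (Q : Matrix (Fin b) (Fin a) ℝ) (x : Fin a) (y : Fin b) :
    Q.mulVec (tdir a x) y = Q y x - (∑ z, Q y z) / a := by
  simp [Matrix.mulVec, dotProduct, tdir, mul_sub, sum_sub_distrib, ← sum_mul, div_eq_mul_inv]

lemma sum_mulVec {a b : ℕ} (Q : Matrix (Fin b) (Fin a) ℝ) (hQcol : ∀ x, ∑ y, Q y x = 1)
    (p : Fin a → ℝ) : ∑ y, Q.mulVec p y = ∑ x, p x := by
  simp only [Matrix.mulVec, dotProduct]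
  rw [sum_comm]
  simp [← sum_mul, hQcol]

/-- Popoviciu-type bound: `a` numbers in `[m, M]` have total squared deviation from their mean
at most `a (M - m)² / 4`. -/
lemma sum_sq_dev_le {a : ℕ} (ha : 0 < a) (u : Fin a → ℝ) (m M : ℝ) (h1 : ∀ x, m ≤ u x)
    (h2 : ∀ x, u x ≤ M) :
    ∑ x, (u x - (∑ z, u z) / a) ^ 2 ≤ a * (M - m) ^ 2 / 4 := by
  have ha' : (0 : ℝ) < a := by exact_mod_cast ha
  set A := (∑ z, u z) / a with hA
  have hS : ∑ z, u z = a * A := by rw [hA]; field_simp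
  have e1 : ∑ x, (u x - (m + M) / 2) ^ 2 =
      ∑ x, (u x - A) ^ 2 + a * (A - (m + M) / 2) ^ 2 := by
    have : ∀ x, (u x - (m + M) / 2) ^ 2 = (u x - A) ^ 2 + 2 * (A - (m + M) / 2) * u x +
      ((A - (m + M) / 2) ^ 2 - 2 * (A - (m + M) / 2) * A) := by intro x; ring
    simp only [this, sum_add_distrib, ← mul_sum, hS]
    simp
    ring
  have e2 : ∑ x, (u x - (m + M) / 2) ^ 2 ≤ ∑ _x : Fin a, (M - m) ^ 2 / 4 :=
    sum_le_sum fun x _ => by nlinarith [mul_nonneg (sub_nonneg.2 (h1 x)) (sub_nonneg.2 (h2 x))]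
  simp at e2
  nlinarith [mul_nonneg ha'.le (sq_nonneg (A - (m + M) / 2))]

lemma mulVec_pos {a b : ℕ} {Q : Matrix (Fin b) (Fin a) ℝ} (hQpos : ∀ y x, 0 < Q y x)
    {p : Fin a → ℝ} (hp : p ∈ simplex a) (y : Fin b) : 0 < Q.mulVec p y := by
  have h : ∃ x ∈ (univ : Finset (Fin a)), 0 < p x := by
    by_contra! h
    have := sum_nonpos h
    linarith [hp.2]
  obtain ⟨x, -, hx⟩ := h
  exact sum_pos' (fun z _ => mul_nonneg (hQpos y z).le (hp.1 z))
    ⟨x, mem_univ x, mul_pos (hQpos y x) hx⟩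

/-- The trace of the Fisher information on the tangent space is at most `a (e^ε - 1)² / 4`
under `ε`-LDP. -/
lemma fisher_trace_le {a b : ℕ} (ha : 2 ≤ a) {Q : Matrix (Fin b) (Fin a) ℝ}
    (hQpos : ∀ y x, 0 < Q y x) (hQcol : ∀ x, ∑ y, Q y x = 1) {ε : ℝ}
    (hLDP : SatisfiesLDP Q ε) {p : Fin a → ℝ} (hp : p ∈ simplex a) :
    ∑ x, ∑ y, Q.mulVec (tdir a x) y ^ 2 / Q.mulVec p y ≤ a * (Real.exp ε - 1) ^ 2 / 4 := by
  have : Nonempty (Fin a) := ⟨⟨0, by omega⟩⟩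
  have hmin : ∀ y, ∃ x0, ∀ x, Q y x0 ≤ Q y x := fun y => Finite.exists_min (Q y)
  choose x0 hx0 using hmin
  rw [sum_comm]
  have hy : ∀ y, ∑ x, Q.mulVec (tdir a x) y ^ 2 / Q.mulVec p y ≤
      a * (Real.exp ε - 1) ^ 2 / 4 * Q y (x0 y) := by
    intro y
    rw [← sum_div]
    have hm := hQpos y (x0 y)
    have hge : Q y (x0 y) ≤ Q.mulVec p y := by
      calc Q y (x0 y) = ∑ x, Q y (x0 y) * p x := by rw [← mul_sum, hp.2, mul_one]
        _ ≤ _ := sum_le_sum fun x _ => mul_le_mul_of_nonneg_right (hx0 y x) (hp.1 x)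
    have hdev := sum_sq_dev_le (by omega : 0 < a) (Q y) (Q y (x0 y)) (Real.exp ε * Q y (x0 y))
      (hx0 y) (fun x => hLDP (x0 y) x y)
    simp only [mulVec_tdir]
    rw [div_le_iff₀ (hm.trans_le hge)]
    refine hdev.trans ?_
    have hK : 0 ≤ a * (Real.exp ε - 1) ^ 2 / 4 * Q y (x0 y) := by positivity
    nlinarith [mul_le_mul_of_nonneg_left hge hK]
  refine (sum_le_sum fun y _ => hy y).trans ?_
  rw [← mul_sum]
  have x1 : Fin a := Classical.arbitrary _
  have : ∑ y, Q y (x0 y) ≤ 1 := by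
    rw [← hQcol x1]
    exact sum_le_sum fun y _ => hx0 y x1
  have hK : 0 ≤ a * (Real.exp ε - 1) ^ 2 / 4 := by positivity
  nlinarith [mul_le_mul_of_nonneg_left this hK]

/-! ### The simplex, its parametrisation and the prior -/

lemma emb_add {a : ℕ} (ha : 2 ≤ a) (q : Fin (a - 1) → ℝ) (t : ℝ) (v : Fin a → ℝ)
    (hv : ∑ x, v x = 0) :
    emb a (q + t • fun i : Fin (a - 1) => v ⟨i, lt_of_lt_of_le i.2 (Nat.sub_le a 1)⟩) =
      emb a q + t • v := by
  obtain ⟨m, rfl⟩ : ∃ m, a = m + 1 := ⟨a - 1, by omega⟩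
  rw [Fin.sum_univ_castSucc] at hv
  ext x
  simp only [emb, Pi.add_apply, Pi.smul_apply, smul_eq_mul]
  by_cases h : (x : ℕ) < m + 1 - 1
  · simp only [h, dite_true]
  · have hx : x = Fin.last m := by
      ext; simp; omega
    subst hx
    simp only [h, dite_false, sum_add_distrib, ← mul_sum]
    have : ∑ i : Fin (m + 1 - 1), v ⟨i, lt_of_lt_of_le i.2 (Nat.sub_le (m + 1) 1)⟩ =
        ∑ i : Fin m, v i.castSucc := rfl
    rw [this]
    linear_combination (-t) * hv

lemma emb_mem {a : ℕ} (ha : 2 ≤ a) {q : Fin (a - 1) → ℝ} (hq : q ∈ stdCorner (a - 1)) :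
    emb a q ∈ simplex a := by
  obtain ⟨m, rfl⟩ : ∃ m, a = m + 1 := ⟨a - 1, by omega⟩
  refine ⟨fun x => ?_, ?_⟩
  · simp only [emb]
    split_ifs with h
    · exact hq.1 _
    · linarith [hq.2]
  · rw [Fin.sum_univ_castSucc]
    simp [emb]

lemma continuous_emb (a : ℕ) : Continuous (emb a) := by
  refine continuous_pi fun x => ?_
  simp only [emb]
  split_ifs with h <;> fun_prop

lemma continuous_mulVec_apply {a b : ℕ} (Q : Matrix (Fin b) (Fin a) ℝ) (y : Fin b) :
    Continuous fun p : Fin a → ℝ => Q.mulVec p y := by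
  simp only [Matrix.mulVec, dotProduct]
  fun_prop

lemma continuous_lik {a b n : ℕ} (Q : Matrix (Fin b) (Fin a) ℝ) (y : Fin n → Fin b) :
    Continuous (lik Q y) :=
  continuous_finsetProd _ fun i _ => continuous_mulVec_apply Q (y i)

lemma isClosed_simplex (a : ℕ) : IsClosed (simplex a) := by
  simp only [simplex, Set.ofPred_and, Set.ofPred_forall]
  exact (isClosed_iInter fun x => isClosed_le continuous_const (continuous_apply x)).inter
    (isClosed_eq (by fun_prop) continuous_const)

lemma isCompact_simplex (a : ℕ) : IsCompact (simplex a) := by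
  refine (isCompact_Icc (a := (0 : Fin a → ℝ)) (b := 1)).of_isClosed_subset (isClosed_simplex a) ?_
  intro p hp
  refine ⟨fun x => hp.1 x, fun x => ?_⟩
  rw [Pi.one_apply, ← hp.2]
  exact single_le_sum (fun z _ => hp.1 z) (mem_univ x)

lemma isClosed_stdCorner (m : ℕ) : IsClosed (stdCorner m) := by
  simp only [stdCorner, Set.ofPred_and, Set.ofPred_forall]
  exact (isClosed_iInter fun x => isClosed_le continuous_const (continuous_apply x)).inter
    (isClosed_le (by fun_prop) continuous_const)

lemma isCompact_stdCorner (m : ℕ) : IsCompact (stdCorner m) := by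
  refine (isCompact_Icc (a := (0 : Fin m → ℝ)) (b := 1)).of_isClosed_subset
    (isClosed_stdCorner m) ?_
  intro p hp
  refine ⟨fun x => hp.1 x, fun x => ?_⟩
  exact (single_le_sum (fun z _ => hp.1 z) (mem_univ x)).trans hp.2

lemma convex_stdCorner (m : ℕ) : Convex ℝ (stdCorner m) := by
  intro p hp q hq s t hs ht hst
  refine ⟨fun i => ?_, ?_⟩
  · have := hp.1 i
    have := hq.1 i
    simp only [Pi.add_apply, Pi.smul_apply, smul_eq_mul]
    positivity
  · simp only [Pi.add_apply, Pi.smul_apply, smul_eq_mul, sum_add_distrib, ← mul_sum]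
    nlinarith [mul_le_mul_of_nonneg_left hp.2 hs, mul_le_mul_of_nonneg_left hq.2 ht]

lemma lik_pos {a b n : ℕ} {Q : Matrix (Fin b) (Fin a) ℝ} (hQpos : ∀ y x, 0 < Q y x)
    (y : Fin n → Fin b) {p : Fin a → ℝ} (hp : p ∈ simplex a) : 0 < lik Q y p :=
  prod_pos fun i _ => mulVec_pos hQpos hp (y i)

lemma ae_mem_simplex {a : ℕ} (ha : 2 ≤ a) {μ : Measure (Fin a → ℝ)} [IsProbabilityMeasure μ]
    {f : (Fin (a - 1) → ℝ) → ℝ} (hf : IsContDensity μ f) : ∀ᵐ p ∂μ, p ∈ simplex a := by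
  have hms := (isClosed_simplex a).measurableSet
  have h := hf.2.2.2 ((simplex a)ᶜ.indicator 1) (measurable_one.indicator hms.compl)
    ⟨1, fun p => by by_cases hp : p ∈ simplex a <;> simp [hp]⟩
  rw [integral_indicator_one hms.compl, setIntegral_eq_zero_of_forall_eq_zero] at h
  · rw [measureReal_eq_zero_iff] at h
    exact mem_ae_iff.2 h
  · intro q hq
    simp [emb_mem ha hq]

/-- The density formula extended from bounded to arbitrary continuous functions, using that `μ`
lives on the compact simplex. -/
lemma integral_eq_density {a : ℕ} (ha : 2 ≤ a) {μ : Measure (Fin a → ℝ)} [IsProbabilityMeasure μ]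
    {f : (Fin (a - 1) → ℝ) → ℝ} (hf : IsContDensity μ f) {g : (Fin a → ℝ) → ℝ}
    (hg : Continuous g) : ∫ p, g p ∂μ = ∫ q in stdCorner (a - 1), g (emb a q) * f q := by
  have hms := (isClosed_simplex a).measurableSet
  obtain ⟨C, hC⟩ := (isCompact_simplex a).exists_bound_of_continuousOn hg.continuousOn
  have h := hf.2.2.2 ((simplex a).indicator g) (hg.measurable.indicator hms)
    ⟨|C|, fun p => by
      by_cases hp : p ∈ simplex a
      · simpa [hp] using (hC p hp).trans (le_abs_self C)
      · simp [hp]⟩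
  rw [integral_congr_ae (g := (simplex a).indicator g), h]
  · refine setIntegral_congr_fun (isClosed_stdCorner _).measurableSet fun q hq => ?_
    simp [emb_mem ha hq]
  · filter_upwards [ae_mem_simplex ha hf] with p hp
    simp [hp]

lemma integrable_of_continuous {a : ℕ} (ha : 2 ≤ a) {μ : Measure (Fin a → ℝ)}
    [IsProbabilityMeasure μ] {f : (Fin (a - 1) → ℝ) → ℝ} (hf : IsContDensity μ f)
    {g : (Fin a → ℝ) → ℝ} (hg : Continuous g) : Integrable g μ := by
  obtain ⟨C, hC⟩ := (isCompact_simplex a).exists_bound_of_continuousOn hg.continuousOn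
  exact Integrable.of_bound hg.aestronglyMeasurable C
    ((ae_mem_simplex ha hf).mono fun p hp => hC p hp)

/-! ### An upper bound on the risk -/

lemma lik_integral_pos {a b n : ℕ} (ha : 2 ≤ a) {Q : Matrix (Fin b) (Fin a) ℝ}
    (hQpos : ∀ y x, 0 < Q y x) {μ : Measure (Fin a → ℝ)} [IsProbabilityMeasure μ]
    {f : (Fin (a - 1) → ℝ) → ℝ} (hf : IsContDensity μ f) (y : Fin n → Fin b) :
    0 < ∫ p, lik Q y p ∂μ := by
  rw [integral_pos_iff_support_of_nonneg_ae
    ((ae_mem_simplex ha hf).mono fun p hp => (lik_pos hQpos y hp).le)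
    (integrable_of_continuous ha hf (continuous_lik Q y))]
  have : ∀ᵐ p ∂μ, p ∈ Function.support (lik Q y) :=
    (ae_mem_simplex ha hf).mono fun p hp => (lik_pos hQpos y hp).ne'
  have h1 : μ (Function.support (lik Q y)) = 1 := (prob_compl_eq_zero_iff₀
    ((continuous_lik Q y).measurable
      (measurableSet_singleton 0).compl).nullMeasurableSet).1 (mem_ae_iff.1 this)
  rw [h1]
  exact one_pos

lemma integral_sq_lik {a b n : ℕ} (ha : 2 ≤ a) (Q : Matrix (Fin b) (Fin a) ℝ)
    {μ : Measure (Fin a → ℝ)} [IsProbabilityMeasure μ]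
    {f : (Fin (a - 1) → ℝ) → ℝ} (hf : IsContDensity μ f) (y : Fin n → Fin b) (t : Fin a → ℝ) :
    ∫ p, (∑ x, (p x - t x) ^ 2) * lik Q y p ∂μ =
      ∑ x, (∫ p, p x ^ 2 * lik Q y p ∂μ - 2 * t x * ∫ p, p x * lik Q y p ∂μ +
        t x ^ 2 * ∫ p, lik Q y p ∂μ) := by
  have hL := continuous_lik Q y
  simp only [sum_mul]
  rw [integral_finsetSum _ fun x _ => integrable_of_continuous ha hf (by fun_prop)]
  refine sum_congr rfl fun x _ => ?_
  rw [← integral_const_mul, ← integral_const_mul, ← integral_sub, ← integral_add]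
  · congr with p
    ring
  all_goals exact integrable_of_continuous ha hf (by fun_prop)

/-- The posterior mean minimises the Bayes risk. -/
lemma MSE_PiOpt_le {a b n : ℕ} (ha : 2 ≤ a) {Q : Matrix (Fin b) (Fin a) ℝ}
    (hQpos : ∀ y x, 0 < Q y x) {μ : Measure (Fin a → ℝ)} [IsProbabilityMeasure μ]
    {f : (Fin (a - 1) → ℝ) → ℝ} (hf : IsContDensity μ f)
    (Est : (Fin n → Fin b) → (Fin a → ℝ)) :
    MSEdistr (n := n) Q μ (PiOpt Q μ) ≤ MSEdistr Q μ Est := by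
  refine sum_le_sum fun y _ => ?_
  rw [integral_sq_lik ha Q hf, integral_sq_lik ha Q hf]
  refine sum_le_sum fun x _ => ?_
  have hc := lik_integral_pos ha hQpos hf y
  simp only [PiOpt]
  set c := ∫ p, lik Q y p ∂μ
  set m := ∫ p, p x * lik Q y p ∂μ
  have h : 0 ≤ c * (Est y x - m / c) ^ 2 := by positivity
  have e : c * (Est y x - m / c) ^ 2 = Est y x ^ 2 * c - 2 * Est y x * m + m / c * m := by
    field_simp
    ring
  have e2 : (m / c) ^ 2 * c = m / c * m := by
    field_simp
  rw [e2]
  linarith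

lemma exists_left_inverse {a b : ℕ} (Q : Matrix (Fin b) (Fin a) ℝ) (hrank : Q.rank = a) :
    ∃ A : Matrix (Fin a) (Fin b) ℝ, A * Q = 1 := by
  rw [← Matrix.vecMul_surjective_iff_exists_left_inverse]
  have h1 : Qᵀ.rank = a := by rw [Matrix.rank_transpose, hrank]
  have h2 : LinearMap.range Qᵀ.mulVecLin = ⊤ := by
    apply Submodule.eq_top_of_finrank_eq
    rw [← Matrix.rank, h1]
    simp
  intro v
  obtain ⟨w, hw⟩ := LinearMap.range_eq_top.1 h2 v
  exact ⟨w, by simpa [Matrix.mulVec_transpose] using hw⟩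

/-- The risk is `O(1/n)`: an unbiased linear estimator built from a left inverse `A` of `Q`
achieves this rate. -/
lemma exists_MSE_upper {a b : ℕ} (ha : 2 ≤ a) {Q : Matrix (Fin b) (Fin a) ℝ}
    (hQpos : ∀ y x, 0 < Q y x) (hQcol : ∀ x, ∑ y, Q y x = 1) (hrank : Q.rank = a)
    {μ : Measure (Fin a → ℝ)} [IsProbabilityMeasure μ]
    {f : (Fin (a - 1) → ℝ) → ℝ} (hf : IsContDensity μ f) :
    ∃ C : ℝ, ∀ n : ℕ, 1 ≤ n → (n : ℝ) * MSEdistr (n := n) Q μ (PiOpt Q μ) ≤ C := by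
  obtain ⟨A, hA⟩ := exists_left_inverse Q hrank
  have hAp : ∀ p : Fin a → ℝ, ∀ x, ∑ y, Q.mulVec p y * A x y = p x := by
    intro p x
    have : A.mulVec (Q.mulVec p) x = p x := by rw [Matrix.mulVec_mulVec, hA, Matrix.one_mulVec]
    rw [← this]
    simp only [Matrix.mulVec, dotProduct]
    exact sum_congr rfl fun y _ => by ring
  set V : (Fin a → ℝ) → ℝ := fun p => ∑ x, ∑ y, Q.mulVec p y * (A x y - p x) ^ 2 with hV
  have hVc : Continuous V := by
    have := continuous_mulVec_apply Q
    fun_prop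
  refine ⟨∫ p, V p ∂μ, fun n hn => ?_⟩
  have hn0 : (0 : ℝ) < n := by exact_mod_cast hn
  set Est : (Fin n → Fin b) → (Fin a → ℝ) := fun y x => (∑ i, A x (y i)) / n with hEst
  have hle := MSE_PiOpt_le ha hQpos hf Est
  have hEq : MSEdistr Q μ Est = (1 / n) * ∫ p, V p ∂μ := by
    unfold MSEdistr
    rw [← integral_finsetSum _ fun y _ => integrable_of_continuous ha hf (by
      have := continuous_lik Q y
      fun_prop), ← integral_const_mul]
    refine integral_congr_ae ((ae_mem_simplex ha hf).mono fun p hp => ?_)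
    simp only [sum_mul, hV, mul_sum]
    rw [sum_comm]
    refine sum_congr rfl fun x _ => ?_
    have h1 : ∑ y, Q.mulVec p y = 1 := by rw [sum_mulVec Q hQcol, hp.2]
    have h2 : ∑ y, Q.mulVec p y * (A x y - p x) = 0 := by
      simp only [mul_sub, sum_sub_distrib, ← sum_mul, hAp, h1]
      ring
    have key := iid_second_moment _ _ h1 h2 n 0
    rw [← mul_sum]
    have h3 : ∀ y : Fin n → Fin b, (p x - Est y x) ^ 2 * lik Q y p =
        (1 / n ^ 2) * ((∏ i, Q.mulVec p (y i)) * (0 + ∑ i, (A x (y i) - p x)) ^ 2) := by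
      intro y
      simp only [hEst, lik, sum_sub_distrib, sum_const, card_univ, Fintype.card_fin, nsmul_eq_mul]
      field_simp
      ring
    simp only [h3]
    rw [← mul_sum, key]
    field_simp
    ring
  calc (n : ℝ) * MSEdistr (n := n) Q μ (PiOpt Q μ) ≤ n * ((1 / n) * ∫ p, V p ∂μ) := by
        rw [← hEq]; gcongr
    _ = _ := by field_simp

/-! ### Smooth minorants of the density -/

/-- A continuous nonnegative density on `Δ` is approximated from below, in mass, by squares of
`C¹` functions supported in `Δ`. -/
lemma exists_smooth_minorant {m : ℕ} (hm : 0 < m) {f : (Fin m → ℝ) → ℝ}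
    (hfc : ContinuousOn f (stdCorner m)) (hf0 : ∀ q, 0 ≤ f q)
    (hf1 : ∫ q in stdCorner m, f q = 1) {δ : ℝ} (hδ : 0 < δ) :
    ∃ h : (Fin m → ℝ) → ℝ, ContDiff ℝ 1 h ∧ (∀ q ∉ stdCorner m, h q = 0) ∧
      (∀ q, h q ^ 2 ≤ f q) ∧ 1 - δ < ∫ q in stdCorner m, h q ^ 2 := by
  set Δ := stdCorner m with hΔ
  have hΔc : IsClosed Δ := isClosed_stdCorner m
  -- `F N` is `√f` cut off near the boundary of `Δ`; shrinking it by `1/(N+1)` leaves room for a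
  -- smooth approximation that stays below `√f`.
  set d : (Fin m → ℝ) → ℝ := fun q => Metric.infDist q Δᶜ with hd
  have hdc : Continuous d := Metric.continuous_infDist_pt _
  have hd0 : ∀ q ∈ closure Δᶜ, d q = 0 := fun q hq => Metric.infDist_zero_of_mem_closure hq
  set F : ℕ → (Fin m → ℝ) → ℝ := fun N q => min (√(f q)) (N * d q) with hF
  have hFz : ∀ N, ∀ q ∈ closure Δᶜ, F N q = 0 := by
    intro N q hq
    simp [hF, hd0 q hq]
  have hFc : ∀ N, Continuous (F N) := by
    intro N
    have h1 : ContinuousOn (F N) Δ := ContinuousOn.inf hfc.sqrt (by fun_prop)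
    have h2 : ContinuousOn (F N) (closure Δᶜ) :=
      (continuousOn_const (c := (0 : ℝ))).congr fun q hq => hFz N q hq
    have h3 := h1.union_of_isClosed h2 hΔc isClosed_closure
    rw [← continuousOn_univ]
    refine h3.mono fun q _ => ?_
    by_cases hq : q ∈ Δ
    · exact Or.inl hq
    · exact Or.inr (subset_closure hq)
  have happ : ∀ N : ℕ, ∃ g : (Fin m → ℝ) → ℝ, ContDiff ℝ 1 g ∧
      (∀ q, dist (g q) (max (F N q - 1 / (N + 1)) 0) < 1 / ((N : ℝ) + 1)) ∧
      Function.support g ⊆ Function.support (fun q => max (F N q - 1 / (N + 1)) 0) := by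
    intro N
    exact Continuous.exists_contDiff_approx (f := fun q => max (F N q - 1 / (N + 1)) 0)
      (ε := fun _ => 1 / ((N : ℝ) + 1)) 1
      (((hFc N).sub continuous_const).max continuous_const)
      continuous_const (fun _ => by positivity)
  choose g hg1 hg2 hg3 using happ
  have hF0 : ∀ N q, 0 ≤ F N q := fun N q =>
    le_min (Real.sqrt_nonneg _) (mul_nonneg N.cast_nonneg Metric.infDist_nonneg)
  have hgabs : ∀ N q, |g N q| ≤ F N q := by
    intro N q
    by_cases hq : F N q ≤ 1 / ((N : ℝ) + 1)
    · have : g N q = 0 := by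
        by_contra hne
        have := hg3 N (show q ∈ Function.support (g N) from hne)
        simp only [Function.mem_support] at this
        exact this (max_eq_right (by linarith))
      rw [this, abs_zero]
      exact hF0 N q
    · push Not at hq
      have h := hg2 N q
      rw [max_eq_left (by linarith), Real.dist_eq, abs_lt] at h
      have hpos : 0 < 1 / ((N : ℝ) + 1) := by positivity
      exact abs_le.2 ⟨by linarith, by linarith⟩
  have hgf : ∀ N q, g N q ^ 2 ≤ f q := by
    intro N q
    rw [← sq_abs, ← Real.sq_sqrt (hf0 q)]
    exact pow_le_pow_left₀ (abs_nonneg _) ((hgabs N q).trans (min_le_left _ _)) 2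
  have hgz : ∀ N, ∀ q ∉ Δ, g N q = 0 := by
    intro N q hq
    have := hgabs N q
    rw [hFz N q (subset_closure hq)] at this
    exact abs_nonpos_iff.1 this
  have hlim : Tendsto (fun N => ∫ q in Δ, g N q ^ 2) atTop (nhds (∫ q in Δ, f q)) := by
    refine tendsto_integral_of_dominated_convergence f
      (fun N => ((hg1 N).continuous.pow 2).aestronglyMeasurable)
      (hfc.integrableOn_compact (isCompact_stdCorner m))
      (fun N => Eventually.of_forall fun q => by
        rw [Real.norm_of_nonneg (sq_nonneg _)]; exact hgf N q) ?_
    have hfr : ∀ᵐ q ∂(volume.restrict Δ), q ∉ frontier Δ :=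
      ae_restrict_of_ae (measure_eq_zero_iff_ae_notMem.1
        ((convex_stdCorner m).addHaar_frontier volume))
    filter_upwards [hfr, ae_restrict_mem hΔc.measurableSet] with q hq hqΔ
    have hne : (Δᶜ).Nonempty := ⟨fun _ => -1, fun hmem => by
      have := hmem.1 ⟨0, hm⟩
      norm_num at this⟩
    have hdpos : 0 < d q := by
      refine (Metric.infDist_nonneg).lt_of_ne' fun h0 => hq ?_
      have : q ∈ closure Δᶜ := (Metric.mem_closure_iff_infDist_zero hne).2 h0
      rw [frontier_eq_closure_inter_closure]
      exact ⟨subset_closure hqΔ, this⟩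
    have hinv : Tendsto (fun N : ℕ => 1 / ((N : ℝ) + 1)) atTop (nhds 0) :=
      tendsto_one_div_add_atTop_nhds_zero_nat
    have hFl : Tendsto (fun N => F N q) atTop (nhds (√(f q))) := by
      refine tendsto_const_nhds.congr' ?_
      have := (tendsto_natCast_atTop_atTop (R := ℝ)).atTop_mul_const hdpos
      filter_upwards [this.eventually_ge_atTop (√(f q))] with N hN
      exact (min_eq_left hN).symm
    have hgl : Tendsto (fun N => g N q) atTop (nhds (√(f q))) := by
      have hlow : Tendsto (fun N => F N q - 1 / ((N : ℝ) + 1) - 1 / ((N : ℝ) + 1)) atTop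
          (nhds (√(f q))) := by simpa using (hFl.sub hinv).sub hinv
      refine tendsto_of_tendsto_of_tendsto_of_le_of_le hlow hFl (fun N => ?_)
        (fun N => (le_abs_self _).trans (hgabs N q))
      have h := hg2 N q
      rw [Real.dist_eq, abs_lt] at h
      have := le_max_left (F N q - 1 / ((N : ℝ) + 1)) 0
      simp only
      linarith
    have := hgl.pow 2
    rwa [Real.sq_sqrt (hf0 q)] at this
  rw [hf1] at hlim
  obtain ⟨N, hN⟩ := (hlim.eventually_const_lt (show 1 - δ < 1 by linarith)).exists
  exact ⟨g N, hg1 N, hgz N, hgf N, hN⟩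

/-! ### The van Trees inequality -/

/-- Derivative of the likelihood at `p` in the direction `v`, in a form without denominators. -/
def dlik {a b n : ℕ} (Q : Matrix (Fin b) (Fin a) ℝ) (y : Fin n → Fin b) (v p : Fin a → ℝ) : ℝ :=
  ∑ i, (∏ j ∈ univ.erase i, Q.mulVec p (y j)) * Q.mulVec v (y i)

lemma continuous_dlik {a b n : ℕ} (Q : Matrix (Fin b) (Fin a) ℝ) (y : Fin n → Fin b)
    (v : Fin a → ℝ) : Continuous (dlik Q y v) := by
  have := continuous_mulVec_apply Q
  unfold dlik
  fun_prop

lemma hasDerivAt_lik {a b n : ℕ} (Q : Matrix (Fin b) (Fin a) ℝ) (y : Fin n → Fin b)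
    (v p : Fin a → ℝ) : HasDerivAt (fun t : ℝ => lik Q y (p + t • v)) (dlik Q y v p) 0 := by
  have h : ∀ i ∈ (univ : Finset (Fin n)),
      HasDerivAt (fun t : ℝ => Q.mulVec (p + t • v) (y i)) (Q.mulVec v (y i)) 0 := by
    intro i _
    simp only [Matrix.mulVec_add, Matrix.mulVec_smul, Pi.add_apply, Pi.smul_apply, smul_eq_mul]
    simpa using ((hasDerivAt_id (0 : ℝ)).mul_const (Q.mulVec v (y i))).const_add
      (Q.mulVec p (y i))
  have := HasDerivAt.fun_finsetProd h
  simpa [lik, dlik] using this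

lemma dlik_eq {a b n : ℕ} {Q : Matrix (Fin b) (Fin a) ℝ} (hQpos : ∀ y x, 0 < Q y x)
    (y : Fin n → Fin b) (v : Fin a → ℝ) {p : Fin a → ℝ} (hp : p ∈ simplex a) :
    dlik Q y v p = lik Q y p * ∑ i, Q.mulVec v (y i) / Q.mulVec p (y i) := by
  rw [dlik, lik, mul_sum]
  refine sum_congr rfl fun i _ => ?_
  rw [← mul_prod_erase univ _ (mem_univ i)]
  have := (mulVec_pos hQpos hp (y i)).ne'
  field_simp

/-- `∫_Δ ∂_d (h² W) = 0` for `h` vanishing outside `Δ`. -/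
lemma integral_by_parts_sq {m : ℕ} {h W W' : (Fin m → ℝ) → ℝ} {d : Fin m → ℝ}
    (hh : ContDiff ℝ 1 h) (hz : ∀ q ∉ stdCorner m, h q = 0) (hW : Continuous W)
    (hW' : Continuous W') (hd : ∀ q, HasLineDerivAt ℝ W (W' q) q d) :
    ∫ q in stdCorner m, (h q ^ 2 * W' q + 2 * h q * fderiv ℝ h q d * W q) = 0 := by
  have hc : Continuous h := hh.continuous
  have hc' : Continuous fun q => fderiv ℝ h q d :=
    (hh.continuous_fderiv one_ne_zero).clm_apply continuous_const
  have hs : HasCompactSupport h := HasCompactSupport.intro (isCompact_stdCorner m) hz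
  have hdh : ∀ q, HasLineDerivAt ℝ h (fderiv ℝ h q d) q d := fun q =>
    ((hh.differentiable one_ne_zero q).hasFDerivAt).hasLineDerivAt d
  have hdg : ∀ q, HasLineDerivAt ℝ (fun q => h q * W q)
      (fderiv ℝ h q d * W q + h q * W' q) q d := by
    intro q
    have := HasDerivAt.fun_mul (hdh q) (hd q)
    simpa [HasLineDerivAt] using this
  have i1 : Integrable fun q => h q * (h q * W' q) :=
    Continuous.integrable_of_hasCompactSupport (by fun_prop) hs.mul_right
  have i2 : Integrable fun q => h q * (fderiv ℝ h q d * W q) :=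
    Continuous.integrable_of_hasCompactSupport (by fun_prop) hs.mul_right
  have i3 : Integrable fun q => fderiv ℝ h q d * (h q * W q) :=
    i2.congr (Eventually.of_forall fun q => by simp only; ring)
  have i4 : Integrable fun q => h q * (fderiv ℝ h q d * W q + h q * W' q) := by
    simp only [mul_add]
    exact i2.add i1
  have i5 : Integrable fun q => h q * (h q * W q) :=
    Continuous.integrable_of_hasCompactSupport (by fun_prop) hs.mul_right
  have key := integral_bilinear_hasLineDerivAt_right_eq_neg_left_of_integrable
    (μ := (volume : Measure (Fin m → ℝ))) (B := ContinuousLinearMap.mul ℝ ℝ)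
    (f := h) (f' := fun q => fderiv ℝ h q d) (g := fun q => h q * W q)
    (g' := fun q => fderiv ℝ h q d * W q + h q * W' q) (v := d)
    i3 i4 i5 (fun q _ => hdh q) (fun q _ => hdg q)
  simp only [ContinuousLinearMap.mul_apply'] at key
  rw [setIntegral_eq_integral_of_forall_compl_eq_zero (fun q hq => by simp [hz q hq])]
  have : ∀ q, h q ^ 2 * W' q + 2 * h q * fderiv ℝ h q d * W q =
      h q * (fderiv ℝ h q d * W q + h q * W' q) + fderiv ℝ h q d * (h q * W q) := by
    intro q; ring
  simp only [this]
  rw [integral_add i4 i3, key]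
  ring

/-- The direction `tdir a x` read in the coordinates `q` of `Δ`: its first `a - 1` coordinates. -/
def qdir (a : ℕ) (x : Fin a) : Fin (a - 1) → ℝ :=
  fun i => tdir a x ⟨i, lt_of_lt_of_le i.2 (Nat.sub_le a 1)⟩

/-- The contribution of the direction `tdir a x` to the van Trees inequality. Integrating by parts
the field `(p_x - Est_x) L h²` along this direction gives `(1 - 1/a) ∫ h² L` on one side and the
error times the score on the other; averaging over the observations, the cross terms in the squared
score vanish. -/
lemma van_trees_coord {a b n : ℕ} (ha : 2 ≤ a) {Q : Matrix (Fin b) (Fin a) ℝ}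
    (hQpos : ∀ y x, 0 < Q y x) (hQcol : ∀ x, ∑ y, Q y x = 1)
    {h : (Fin (a - 1) → ℝ) → ℝ} (hh : ContDiff ℝ 1 h)
    (hz : ∀ q ∉ stdCorner (a - 1), h q = 0) (Est : (Fin n → Fin b) → (Fin a → ℝ))
    {c : ℝ} (hc : 0 < c) (x : Fin a) :
    (1 - 1 / (a : ℝ)) * ∫ q in stdCorner (a - 1), h q ^ 2 ≤
      c / 2 * (∑ y, ∫ q in stdCorner (a - 1),
          h q ^ 2 * ((emb a q x - Est y x) ^ 2 * lik Q y (emb a q))) +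
        1 / (2 * c) * ∫ q in stdCorner (a - 1), (4 * fderiv ℝ h q (qdir a x) ^ 2 +
          n * (h q ^ 2 * ∑ y, Q.mulVec (tdir a x) y ^ 2 / Q.mulVec (emb a q) y)) := by
  set Δ := stdCorner (a - 1) with hΔ
  have hΔm : MeasurableSet Δ := (isClosed_stdCorner _).measurableSet
  have hI : ∀ {g : (Fin (a - 1) → ℝ) → ℝ}, ContinuousOn g Δ → IntegrableOn g Δ :=
    fun hg => hg.integrableOn_compact (isCompact_stdCorner _)
  set v := tdir a x with hv
  set D : (Fin (a - 1) → ℝ) → ℝ := fun q => fderiv ℝ h q (qdir a x) with hD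
  have hDc : Continuous D := (hh.continuous_fderiv one_ne_zero).clm_apply continuous_const
  have hhc : Continuous h := hh.continuous
  have hec := continuous_emb a
  have hex : Continuous fun q => emb a q x := (continuous_apply x).comp hec
  have hLc : ∀ y : Fin n → Fin b, Continuous fun q => lik Q y (emb a q) :=
    fun y => (continuous_lik Q y).comp hec
  have hdLc : ∀ y : Fin n → Fin b, Continuous fun q => dlik Q y v (emb a q) :=
    fun y => (continuous_dlik Q y v).comp hec
  have hsc : ∀ y : Fin b, ContinuousOn
      (fun q => h q * (Q.mulVec v y / Q.mulVec (emb a q) y)) Δ := fun y =>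
    hhc.continuousOn.mul (continuousOn_const.div
      ((continuous_mulVec_apply Q y).comp hec).continuousOn
      fun q hq => (mulVec_pos hQpos (emb_mem ha hq) y).ne')
  have hUc : ∀ y : Fin n → Fin b, ContinuousOn (fun q => lik Q y (emb a q) *
      (2 * D q + ∑ i, h q * (Q.mulVec v (y i) / Q.mulVec (emb a q) (y i))) ^ 2) Δ := fun y =>
    (hLc y).continuousOn.mul (((continuous_const.mul hDc).continuousOn.add
      (continuousOn_finsetSum _ fun i _ => hsc (y i))).pow 2)
  have hvx : v x = 1 - 1 / (a : ℝ) := by simp [hv, tdir]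
  -- integration by parts for the function `(p_x - Est_x) L`, for each observation `y`
  have hy : ∀ y : Fin n → Fin b, ∫ q in Δ, v x * (h q ^ 2 * lik Q y (emb a q)) ≤
      c / 2 * (∫ q in Δ, h q ^ 2 * ((emb a q x - Est y x) ^ 2 * lik Q y (emb a q))) +
      1 / (2 * c) * ∫ q in Δ, lik Q y (emb a q) *
        (2 * D q + ∑ i, h q * (Q.mulVec v (y i) / Q.mulVec (emb a q) (y i))) ^ 2 := by
    intro y
    have hLy := hLc y
    have hdLy := hdLc y
    have hparts := integral_by_parts_sq (d := qdir a x) hh hz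
      (W := fun q => (emb a q x - Est y x) * lik Q y (emb a q))
      (W' := fun q => v x * lik Q y (emb a q) + (emb a q x - Est y x) * dlik Q y v (emb a q))
      (by fun_prop) (by fun_prop) (by
        intro q
        have hemb : ∀ t : ℝ, emb a (q + t • qdir a x) = emb a q + t • v := fun t =>
          emb_add ha q t v (sum_tdir x)
        simp only [HasLineDerivAt, hemb]
        have h1 : HasDerivAt (fun t : ℝ => (emb a q + t • v) x - Est y x) (v x) 0 := by
          simpa using (((hasDerivAt_id (0 : ℝ)).mul_const (v x)).const_add
            (emb a q x)).sub_const (Est y x)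
        simpa using HasDerivAt.fun_mul h1 (hasDerivAt_lik Q y v (emb a q)))
    rw [← hΔ] at hparts
    rw [← integral_const_mul, ← integral_const_mul, ← integral_add
      ((hI (by fun_prop)).const_mul _) ((hI (hUc y)).const_mul _)]
    rw [← sub_zero (∫ q in Δ, v x * _), ← hparts, ← integral_sub (hI (by fun_prop))
      (hI (by fun_prop))]
    refine setIntegral_mono_on (hI (by fun_prop))
      (((hI (by fun_prop)).const_mul _).add ((hI (hUc y)).const_mul _)) hΔm fun q hq => ?_
    have hp := emb_mem ha hq
    have hL := (lik_pos hQpos y hp).le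
    simp only [dlik_eq hQpos y v hp, ← mul_sum]
    set L := lik Q y (emb a q)
    set S := ∑ i, Q.mulVec v (y i) / Q.mulVec (emb a q) (y i)
    set e := emb a q x - Est y x
    -- this is `L` times the inequality `-XY ≤ (c/2) X² + Y²/(2c)`
    have hsq : 0 ≤ L * (1 / (2 * c) * (c * (h q * e) + (2 * D q + h q * S)) ^ 2) := by positivity
    have hid : L * (1 / (2 * c) * (c * (h q * e) + (2 * D q + h q * S)) ^ 2) =
        c / 2 * (h q ^ 2 * (e ^ 2 * L)) + 1 / (2 * c) * (L * (2 * D q + h q * S) ^ 2) +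
        (h q * e) * (2 * D q + h q * S) * L := by
      field_simp
      ring
    rw [hid] at hsq
    have hDq : fderiv ℝ h q (qdir a x) = D q := rfl
    rw [hDq]
    linarith
  have hsum := sum_le_sum fun y (_ : y ∈ (univ : Finset (Fin n → Fin b))) => hy y
  rw [sum_add_distrib, ← mul_sum, ← mul_sum,
    ← integral_finsetSum _ (fun y _ => hI (by have := hLc y; fun_prop)),
    ← integral_finsetSum (μ := volume.restrict Δ) (f := fun y q => lik Q y (emb a q) *
      (2 * D q + ∑ i, h q * (Q.mulVec v (y i) / Q.mulVec (emb a q) (y i))) ^ 2)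
      _ (fun y _ => hI (hUc y))] at hsum
  have hmass : ∀ q ∈ Δ, ∑ y, Q.mulVec (emb a q) y = 1 := fun q hq => by
    rw [sum_mulVec Q hQcol, (emb_mem ha hq).2]
  have e1 : ∫ q in Δ, ∑ y : Fin n → Fin b, v x * (h q ^ 2 * lik Q y (emb a q)) =
      (1 - 1 / (a : ℝ)) * ∫ q in Δ, h q ^ 2 := by
    rw [← integral_const_mul]
    refine setIntegral_congr_fun hΔm fun q hq => ?_
    simp only [← mul_sum, lik, hvx]
    rw [iid_total _ (hmass q hq), mul_one]
  have e2 : ∫ q in Δ, ∑ y : Fin n → Fin b, lik Q y (emb a q) *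
      (2 * D q + ∑ i, h q * (Q.mulVec v (y i) / Q.mulVec (emb a q) (y i))) ^ 2 =
      ∫ q in Δ, (4 * D q ^ 2 +
          n * (h q ^ 2 * ∑ y, Q.mulVec v y ^ 2 / Q.mulVec (emb a q) y)) := by
    refine setIntegral_congr_fun hΔm fun q hq => ?_
    have hpos := fun y => (mulVec_pos hQpos (emb_mem ha hq) y).ne'
    simp only [lik]
    rw [iid_second_moment _ (fun y => h q * (Q.mulVec v y / Q.mulVec (emb a q) y)) (hmass q hq)]
    · congr 1
      · ring
      · congr 1
        rw [mul_sum]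
        refine sum_congr rfl fun y _ => ?_
        have := hpos y
        field_simp
    · have : ∀ y, Q.mulVec (emb a q) y * (h q * (Q.mulVec v y / Q.mulVec (emb a q) y)) =
          h q * Q.mulVec v y := by
        intro y
        have := hpos y
        field_simp
      simp only [this, ← mul_sum, sum_mulVec Q hQcol]
      rw [hv, sum_tdir, mul_zero]
  rw [e1, e2] at hsum
  exact hsum

/-- Van Trees inequality in linearised form: Cauchy–Schwarz is replaced by the weighted
AM–GM inequality with a free weight `c`. The squared function `h²` is a `C¹` minorant of the prior
density vanishing outside `Δ`, so replacing the prior by `h²` only lowers the risk, and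
`4 ∑ ∫ (∂h)²` is the Fisher information of `h²`. -/
lemma van_trees {a b n : ℕ} (ha : 2 ≤ a) {Q : Matrix (Fin b) (Fin a) ℝ}
    (hQpos : ∀ y x, 0 < Q y x) (hQcol : ∀ x, ∑ y, Q y x = 1) {ε : ℝ}
    (hLDP : SatisfiesLDP Q ε) {μ : Measure (Fin a → ℝ)} [IsProbabilityMeasure μ]
    {f : (Fin (a - 1) → ℝ) → ℝ} (hf : IsContDensity μ f)
    {h : (Fin (a - 1) → ℝ) → ℝ} (hh : ContDiff ℝ 1 h)
    (hz : ∀ q ∉ stdCorner (a - 1), h q = 0) (hhf : ∀ q, h q ^ 2 ≤ f q)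
    (Est : (Fin n → Fin b) → (Fin a → ℝ)) {c : ℝ} (hc : 0 < c) :
    ((a : ℝ) - 1) * ∫ q in stdCorner (a - 1), h q ^ 2 ≤
      c / 2 * MSEdistr Q μ Est + 1 / (2 * c) *
        (4 * ∑ x, (∫ q in stdCorner (a - 1), fderiv ℝ h q (qdir a x) ^ 2) +
          n * (a * (Real.exp ε - 1) ^ 2 / 4)) := by
  set Δ := stdCorner (a - 1) with hΔ
  have hΔm : MeasurableSet Δ := (isClosed_stdCorner _).measurableSet
  have hI : ∀ {g : (Fin (a - 1) → ℝ) → ℝ}, ContinuousOn g Δ → IntegrableOn g Δ :=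
    fun hg => hg.integrableOn_compact (isCompact_stdCorner _)
  have hhc : Continuous h := hh.continuous
  have hec := continuous_emb a
  have hLc : ∀ y : Fin n → Fin b, Continuous fun q => lik Q y (emb a q) :=
    fun y => (continuous_lik Q y).comp hec
  have hDc : ∀ x, Continuous fun q => fderiv ℝ h q (qdir a x) := fun x =>
    (hh.continuous_fderiv one_ne_zero).clm_apply continuous_const
  have hex : ∀ x, Continuous fun q => emb a q x := fun x => (continuous_apply x).comp hec
  have hFc : ∀ x, ContinuousOn
      (fun q => ∑ y, Q.mulVec (tdir a x) y ^ 2 / Q.mulVec (emb a q) y) Δ := fun x =>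
    continuousOn_finsetSum _ fun y _ => continuousOn_const.div
      ((continuous_mulVec_apply Q y).comp hec).continuousOn
      fun q hq => (mulVec_pos hQpos (emb_mem ha hq) y).ne'
  have hsum := sum_le_sum fun x (_ : x ∈ (univ : Finset (Fin a))) =>
    van_trees_coord (n := n) ha hQpos hQcol hh hz Est hc x
  rw [sum_add_distrib, sum_const, card_univ, Fintype.card_fin, nsmul_eq_mul, ← mul_sum,
    ← mul_sum, ← hΔ] at hsum
  have ha0 : (a : ℝ) ≠ 0 := by positivity
  have hleft : (a : ℝ) * ((1 - 1 / (a : ℝ)) * ∫ q in Δ, h q ^ 2) =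
      ((a : ℝ) - 1) * ∫ q in Δ, h q ^ 2 := by
    field_simp
  rw [hleft] at hsum
  refine hsum.trans (add_le_add (mul_le_mul_of_nonneg_left ?_ (by positivity))
    (mul_le_mul_of_nonneg_left ?_ (by positivity)))
  · rw [sum_comm]
    refine sum_le_sum fun y _ => ?_
    have hLy := hLc y
    rw [integral_eq_density ha hf (by have := continuous_lik Q y; fun_prop), ← hΔ,
      ← integral_finsetSum _ fun x _ => hI (by have := hex x; fun_prop)]
    refine setIntegral_mono_on (hI (by fun_prop)) (hI ?_) hΔm fun q hq => ?_
    · have : ContinuousOn f Δ := hf.1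
      fun_prop
    · have hL := (lik_pos hQpos y (emb_mem ha hq)).le
      rw [← mul_sum, ← sum_mul, mul_comm]
      exact mul_le_mul_of_nonneg_left (hhf q)
        (mul_nonneg (sum_nonneg fun x _ => sq_nonneg _) hL)
  · have hsplit : ∀ x, ∫ q in Δ, (4 * fderiv ℝ h q (qdir a x) ^ 2 +
          n * (h q ^ 2 * ∑ y, Q.mulVec (tdir a x) y ^ 2 / Q.mulVec (emb a q) y)) =
        4 * (∫ q in Δ, fderiv ℝ h q (qdir a x) ^ 2) +
          n * ∫ q in Δ, h q ^ 2 * ∑ y, Q.mulVec (tdir a x) y ^ 2 / Q.mulVec (emb a q) y := by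
      intro x
      have := hDc x
      have i1 : IntegrableOn (fun q => 4 * fderiv ℝ h q (qdir a x) ^ 2) Δ := hI (by fun_prop)
      have i2 : IntegrableOn (fun q =>
          n * (h q ^ 2 * ∑ y, Q.mulVec (tdir a x) y ^ 2 / Q.mulVec (emb a q) y)) Δ :=
        (hI ((hhc.pow 2).continuousOn.mul (hFc x))).const_mul _
      rw [integral_add i1 i2, integral_const_mul, integral_const_mul]
    simp only [hsplit]
    rw [sum_add_distrib, ← mul_sum, ← mul_sum]
    refine add_le_add le_rfl (mul_le_mul_of_nonneg_left ?_ (by positivity))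
    rw [← integral_finsetSum (μ := volume.restrict Δ) (f := fun x q =>
      h q ^ 2 * ∑ y, Q.mulVec (tdir a x) y ^ 2 / Q.mulVec (emb a q) y) _
      fun x _ => hI ((hhc.pow 2).continuousOn.mul (hFc x))]
    have hfI : IntegrableOn f Δ := hI hf.1
    calc _ ≤ ∫ q in Δ, f q * (a * (Real.exp ε - 1) ^ 2 / 4) := by
          refine setIntegral_mono_on (hI (continuousOn_finsetSum _ fun x _ =>
            (hhc.pow 2).continuousOn.mul (hFc x))) (hfI.mul_const _) hΔm fun q hq => ?_
          rw [← mul_sum]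
          have h1 := fisher_trace_le ha hQpos hQcol hLDP (emb_mem ha hq)
          exact (mul_le_mul_of_nonneg_left h1 (sq_nonneg _)).trans
            (mul_le_mul_of_nonneg_right (hhf q) (by positivity))
      _ = _ := by rw [integral_mul_const, hf.2.2.1, one_mul]

/-- asymptotic lower bound `a/(e^ε - 1)²` on `n · MSE^distr`
under `ε`-LDP. -/
theorem liminf_MSEdistr_ge_LDP_bound {a b : ℕ} (ha : 2 ≤ a) (hb : 2 ≤ b)
    (Q : Matrix (Fin b) (Fin a) ℝ)
    (hQpos : ∀ y x, 0 < Q y x) (hQcol : ∀ x, ∑ y, Q y x = 1)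
    (μ : Measure (Fin a → ℝ)) [IsProbabilityMeasure μ]
    (hrank : Q.rank = a)
    (f : (Fin (a - 1) → ℝ) → ℝ) (hf : IsContDensity μ f)
    (hint : Integrable (fun p => Real.log (Dmat Q p).det) μ)
    (ε : ℝ) (hε : 0 < ε) (hLDP : SatisfiesLDP Q ε) :
    (a : ℝ) / (Real.exp ε - 1) ^ 2 ≤
      Filter.liminf (fun n : ℕ => (n : ℝ) * MSEdistr (n := n) Q μ (PiOpt Q μ))
        Filter.atTop := by
  have ha2 : (2 : ℝ) ≤ a := by exact_mod_cast ha
  have hE : 0 < Real.exp ε - 1 := by linarith [Real.add_one_lt_exp hε.ne']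
  obtain ⟨C, hC⟩ := exists_MSE_upper ha hQpos hQcol hrank hf
  -- A real `liminf` is the supremum of the eventual lower bounds only if these are bounded above.
  have hcob : IsCoboundedUnder (· ≥ ·) atTop
      (fun n : ℕ => (n : ℝ) * MSEdistr (n := n) Q μ (PiOpt Q μ)) := by
    refine IsBoundedUnder.isCoboundedUnder_ge ⟨C, ?_⟩
    rw [eventually_map]
    filter_upwards [eventually_ge_atTop 1] with n hn
    exact hC n hn
  set T : ℝ := a * (Real.exp ε - 1) ^ 2 / 4 with hT
  have hTpos : 0 < T := by positivity
  have ha1 : 0 < (a : ℝ) - 1 := by linarith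
  have htarget : (a : ℝ) / (Real.exp ε - 1) ^ 2 ≤ ((a : ℝ) - 1) ^ 2 / T := by
    rw [hT, div_le_div_iff₀ (by positivity) (by positivity)]
    have h1 : (a : ℝ) * a / 4 ≤ ((a : ℝ) - 1) ^ 2 := by nlinarith
    nlinarith [mul_le_mul_of_nonneg_right h1 (sq_nonneg (Real.exp ε - 1))]
  refine htarget.trans (le_of_forall_lt fun w hw => ?_)
  obtain ⟨w', hw1, hw2⟩ := exists_between hw
  refine hw1.trans_le ?_
  set B := ((a : ℝ) - 1) ^ 2 / T with hB
  have hBpos : 0 < B := by positivity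
  -- Up to an `O(1/n)` term the argument yields the lower bound `B (1 - 2δ)`; this `δ` leaves half
  -- of the gap `B - w'` for the `O(1/n)` term.
  set δ := (B - w') / (4 * B) with hδ
  have hδpos : 0 < δ := div_pos (by linarith) (by positivity)
  have hδB : δ * B = (B - w') / 4 := by rw [hδ]; field_simp
  obtain ⟨h, hh, hz, hhf, hmass⟩ :=
    exists_smooth_minorant (by omega : 0 < a - 1) hf.1 hf.2.1 hf.2.2.1 hδpos
  refine le_liminf_of_le hcob ?_
  set J : ℝ := 4 * ∑ x, (∫ q in stdCorner (a - 1), fderiv ℝ h q (qdir a x) ^ 2) with hJ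
  -- `c = K n` with `K = T / (a - 1)` is the asymptotically optimal weight in `van_trees`.
  set K : ℝ := T / ((a : ℝ) - 1) with hK
  have hKpos : 0 < K := by positivity
  have hlim : Tendsto (fun n : ℕ => J / K ^ 2 / (n : ℝ)) atTop (nhds 0) :=
    tendsto_const_div_atTop_nhds_zero_nat _
  filter_upwards [eventually_ge_atTop 1,
    hlim.eventually_lt_const (show 0 < (B - w') / 2 by linarith)] with n hn hJn
  have hn0 : (0 : ℝ) < n := by exact_mod_cast hn
  have hvt := van_trees (n := n) ha hQpos hQcol hLDP hf hh hz hhf (PiOpt Q μ)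
    (c := K * n) (by positivity)
  rw [← hJ, ← hT] at hvt
  set I := ∫ q in stdCorner (a - 1), h q ^ 2
  set M := MSEdistr (n := n) Q μ (PiOpt Q μ)
  have h1 : ((a : ℝ) - 1) * (1 - δ) ≤ ((a : ℝ) - 1) * I :=
    mul_le_mul_of_nonneg_left hmass.le ha1.le
  have h2 := mul_le_mul_of_nonneg_left (h1.trans hvt) (by positivity : 0 ≤ 2 / K)
  have e1 : 2 / K * (((a : ℝ) - 1) * (1 - δ)) = 2 * B * (1 - δ) := by
    rw [hK, hB]; field_simp
  have e2 : 2 / K * (K * n / 2 * M + 1 / (2 * (K * n)) * (J + n * T)) =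
      n * M + J / K ^ 2 / n + B := by
    have hTK : T = K * ((a : ℝ) - 1) := by rw [hK]; field_simp
    have hBK : B = ((a : ℝ) - 1) / K := by rw [hB, hK]; field_simp
    rw [hBK, hTK]
    field_simp
    ring
  rw [e1, e2] at h2
  linarith

end
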